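/- Iterated Hölder estimate for marginal densities: let β₀ < β < 0, W ≥ 0 measurable symmetric on X² with A := sup_x ∫ e^{−βW(x,y)}dμ₀(y) < ∞ and (1/N) log Z_{N,β'} ≤ C for all β' ∈ [β₀, β]. Then the density ρ_j^{(N)} of the j-th marginal of the Gibbs measure μ_β^{(N)} satisfies ρ_j^{(N)}(x₁,…,x_j) ≤ C_j e^{−(β/N) Σ_{k≠l≤j} W(x_k,x_l)} for a constant C_j independent of N, for all N sufficiently large. -/

import Mathlib

open MeasureTheory
open scoped ENNReal

/-- The renormalized mean-field pair Hamiltonian `H^{(N)}(x) = (1/N) Σ_{i≠j} W(x_i,x_j)`. -/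
noncomputable def pairHam {X : Type*} (W : X → X → ℝ) (N : ℕ) (x : Fin N → X) : ℝ :=
  (1 / (N : ℝ)) * ∑ i : Fin N, ∑ k : Fin N, if i ≠ k then W (x i) (x k) else 0

/-!
Split the `N = j + M` particles into the `j` observed ones, `y`, and the `M` others, `z`. With
`b = -β` and `E` the unnormalized pair energy, the exponent is `(b/N) E(y)` plus cross terms
`(2b/N) ∑ᵢₖ W(yᵢ, zₖ)` plus `(b/N) E(z)`. Hölder's inequality with weight `2/N` on each function
`exp (b ∑ₖ W(yᵢ, zₖ))`, whose integral is at most `A ^ M`, makes the cross terms cost no more than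
`A ^ (2j)`. The weight `2j/N` this takes away from `exp ((b/N) E(z))` is made up for by giving
weight `K/N` to the same energy at the larger rate `b₀/M`, where `b₀ = -β₀`, `K (b₀ - b) = 2jb`: its
partition function is at most `exp (C M)`, so this costs at most `exp (|C| K)`. What is left is the
partition function of `z` at rate `b/N`, which the normalization dominates since `W ≥ 0`.
-/

section Exponential

variable {α : Type*}

theorem ofReal_exp_rpow (x t : ℝ) :
    ENNReal.ofReal (Real.exp x) ^ t = ENNReal.ofReal (Real.exp (t * x)) := by
  rw [ENNReal.ofReal_rpow_of_pos (Real.exp_pos x), ← Real.exp_mul, mul_comm]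

theorem ofReal_exp_add (x y : ℝ) :
    ENNReal.ofReal (Real.exp (x + y))
      = ENNReal.ofReal (Real.exp x) * ENNReal.ofReal (Real.exp y) := by
  rw [Real.exp_add, ENNReal.ofReal_mul (Real.exp_pos x).le]

theorem ofReal_exp_sum (s : Finset α) (f : α → ℝ) :
    ENNReal.ofReal (Real.exp (∑ i ∈ s, f i)) = ∏ i ∈ s, ENNReal.ofReal (Real.exp (f i)) := by
  rw [Real.exp_sum, ENNReal.ofReal_prod_of_nonneg fun i _ => (Real.exp_pos (f i)).le]

theorem ofReal_exp_le_ofReal_exp {x y : ℝ} (h : x ≤ y) :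
    ENNReal.ofReal (Real.exp x) ≤ ENNReal.ofReal (Real.exp y) :=
  ENNReal.ofReal_le_ofReal (Real.exp_le_exp.2 h)

theorem rpow_div_le_of_le_exp_mul {Z : ℝ≥0∞} {C M N K : ℝ}
    (hZ : Z ≤ ENNReal.ofReal (Real.exp (C * M))) (hM : 0 < M) (hMN : M ≤ N) (hK : 0 ≤ K) :
    Z ^ (K / N) ≤ ENNReal.ofReal (Real.exp (|C| * K)) := by
  have hN : 0 < N := hM.trans_le hMN
  have hexp : K / N * (C * M) ≤ |C| * K :=
    calc K / N * (C * M) ≤ K / N * (|C| * N) := by gcongr; exact le_abs_self C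
      _ = |C| * K := by field_simp
  calc Z ^ (K / N) ≤ ENNReal.ofReal (Real.exp (C * M)) ^ (K / N) :=
        ENNReal.rpow_le_rpow hZ (by positivity)
    _ ≤ ENNReal.ofReal (Real.exp (|C| * K)) := by
        rw [ofReal_exp_rpow]
        exact ofReal_exp_le_ofReal_exp hexp

theorem pow_rpow_two_div_le {A : ℝ≥0∞} (hA : 1 ≤ A) {m : ℕ} {N : ℝ} (hN : 0 < N) (hm : m ≤ N) :
    (A ^ m) ^ (2 / N) ≤ A ^ 2 := by
  rw [← ENNReal.rpow_natCast, ← ENNReal.rpow_mul, ← ENNReal.rpow_natCast]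
  refine ENNReal.rpow_le_rpow_of_exponent_le hA ?_
  rw [mul_div_left_comm, Nat.cast_ofNat]
  exact mul_le_of_le_one_right zero_le_two ((div_le_one hN).2 hm)

variable [MeasurableSpace α]

theorem one_le_lintegral_exp {μ : Measure α} [IsProbabilityMeasure μ] {f : α → ℝ}
    (hf : 0 ≤ᵐ[μ] f) : 1 ≤ ∫⁻ x, ENNReal.ofReal (Real.exp (f x)) ∂μ := by
  calc (1 : ℝ≥0∞) = ∫⁻ _, 1 ∂μ := by rw [lintegral_one, measure_univ]
    _ ≤ _ := lintegral_mono_ae <| hf.mono fun x hx =>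
      ENNReal.one_le_ofReal.2 (Real.one_le_exp hx)

theorem lintegral_exp_sum_mul_le {ι : Type*} [Fintype ι] {μ : Measure α} {f : ι → α → ℝ}
    (hf : ∀ i, AEMeasurable (f i) μ) {w : ι → ℝ} (hw : ∀ i, 0 ≤ w i) (hw1 : ∑ i, w i = 1) :
    ∫⁻ x, ENNReal.ofReal (Real.exp (∑ i, w i * f i x)) ∂μ
      ≤ ∏ i, (∫⁻ x, ENNReal.ofReal (Real.exp (f i x)) ∂μ) ^ w i := by
  simp only [ofReal_exp_sum, ← ofReal_exp_rpow]
  exact ENNReal.lintegral_prod_norm_pow_le Finset.univ (fun i _ => (hf i).exp.ennreal_ofReal)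
    hw1 fun i _ => hw i

end Exponential

section ProductMeasure

open ProbabilityTheory

variable {ι κ : Type*} [Fintype ι] [Fintype κ] {X : ι → Type*} [∀ i, MeasurableSpace (X i)]
  (μ : ∀ i, Measure (X i)) [∀ i, IsProbabilityMeasure (μ i)]

theorem measurePreserving_pi_comp_injective {g : κ → ι} (hg : Function.Injective g) :
    MeasurePreserving (fun (x : ∀ i, X i) k => x (g k)) (Measure.pi μ)
      (Measure.pi fun k => μ (g k)) := by
  have hindep : iIndepFun (fun i (x : ∀ i, X i) => x i) (Measure.pi μ) :=
    iIndepFun_pi (X := fun _ x => x) fun _ => aemeasurable_id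
  refine ⟨measurable_pi_lambda _ fun k => measurable_pi_apply (g k), ?_⟩
  rw [(iIndepFun_iff_map_fun_eq_pi_map fun k => (measurable_pi_apply (g k)).aemeasurable).1
    (hindep.precomp hg)]
  exact congrArg Measure.pi (funext fun k => (measurePreserving_eval μ (g k)).map_eq)

theorem lintegral_pi_prod {f : ∀ i, X i → ℝ≥0∞} (hf : ∀ i, Measurable (f i)) :
    ∫⁻ x, ∏ i, f i (x i) ∂Measure.pi μ = ∏ i, ∫⁻ a, f i a ∂μ i := by
  rw [lintegral_prod_eq_prod_lintegral_of_indepFun _ _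
    (iIndepFun_pi fun i => (hf i).aemeasurable) fun i => (hf i).comp (measurable_pi_apply i)]
  exact Finset.prod_congr rfl fun i _ => (measurePreserving_eval μ i).lintegral_comp (hf i)

theorem lintegral_pi_exp_sum {Y : Type*} [MeasurableSpace Y] (ν : Measure Y)
    [IsProbabilityMeasure ν] {f : Y → ℝ} (hf : Measurable f) :
    ∫⁻ z : κ → Y, ENNReal.ofReal (Real.exp (∑ k, f (z k))) ∂Measure.pi (fun _ => ν)
      = (∫⁻ a, ENNReal.ofReal (Real.exp (f a)) ∂ν) ^ Fintype.card κ := by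
  simp only [ofReal_exp_sum]
  rw [lintegral_pi_prod (fun _ => ν) fun _ => hf.exp.ennreal_ofReal, Finset.prod_const,
    Finset.card_univ]

end ProductMeasure

theorem sum_comp_le_sum_of_injective {ι κ M : Type*} [Fintype ι] [Fintype κ] [AddCommMonoid M]
    [PartialOrder M] [IsOrderedAddMonoid M] {g : κ → ι} (hg : Function.Injective g) {f : ι → M}
    (hf : ∀ i, 0 ≤ f i) : ∑ k, f (g k) ≤ ∑ i, f i := by
  calc ∑ k, f (g k) = ∑ i ∈ Finset.univ.map ⟨g, hg⟩, f i := by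
        rw [Finset.sum_map, Function.Embedding.coeFn_mk]
    _ ≤ ∑ i, f i := Finset.sum_le_univ_sum_of_nonneg hf

section PairEnergy

variable {X ι κ : Type*} [Fintype ι] [DecidableEq ι] [Fintype κ] [DecidableEq κ]
  {W : X → X → ℝ}

/-- The pair energy `∑_{i ≠ k} W(xᵢ, xₖ)` of a configuration `x`, over ordered pairs and without
the mean-field factor `1 / N` of `pairHam`. The particles are labelled by an arbitrary finite type,
so that configurations can be split along sum types. -/
noncomputable def pairEnergy (W : X → X → ℝ) (x : ι → X) : ℝ :=
  ∑ i, ∑ k, if i ≠ k then W (x i) (x k) else 0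

/-- The interaction energy `∑ᵢ ∑ₖ W(yᵢ, zₖ)` between two groups of particles. -/
noncomputable def crossEnergy (W : X → X → ℝ) (y : ι → X) (z : κ → X) : ℝ :=
  ∑ i, ∑ k, W (y i) (z k)

theorem mul_pairHam (W : X → X → ℝ) {N : ℕ} (x : Fin N → X) (t : ℝ) :
    t * pairHam W N x = t / N * pairEnergy W x := by
  rw [pairHam, pairEnergy, ← mul_assoc, mul_one_div]

theorem pairEnergy_comp_equiv (W : X → X → ℝ) (x : ι → X) (e : κ ≃ ι) :
    pairEnergy W (x ∘ e) = pairEnergy W x := by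
  simp only [pairEnergy, ← e.sum_comp, Function.comp_apply, ne_eq, e.apply_eq_iff_eq]

theorem pairEnergy_sumElim (hW : ∀ a b, W a b = W b a) (y : ι → X) (z : κ → X) :
    pairEnergy W (Sum.elim y z)
      = pairEnergy W y + pairEnergy W z + 2 * crossEnergy W y z := by
  have hcross : ∑ k, ∑ i, W (z k) (y i) = crossEnergy W y z := by
    simp only [crossEnergy, hW (z _)]
    exact Finset.sum_comm
  simp only [pairEnergy, Fintype.sum_sum_type, Sum.elim_inl, Sum.elim_inr, ne_eq,
    Sum.inl.injEq, Sum.inr.injEq, reduceCtorEq, not_false_eq_true, if_true,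
    Finset.sum_add_distrib, hcross]
  rw [← crossEnergy]
  ring

theorem pairEnergy_nonneg (hW : ∀ a b, 0 ≤ W a b) (x : ι → X) : 0 ≤ pairEnergy W x :=
  Finset.sum_nonneg fun _ _ => Finset.sum_nonneg fun _ _ => ite_nonneg (hW _ _) le_rfl

theorem pairEnergy_comp_le (hW : ∀ a b, 0 ≤ W a b) (x : ι → X) {g : κ → ι}
    (hg : Function.Injective g) : pairEnergy W (fun k => x (g k)) ≤ pairEnergy W x := by
  have hterm (i i' : ι) : 0 ≤ if i ≠ i' then W (x i) (x i') else 0 :=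
    ite_nonneg (hW _ _) le_rfl
  calc pairEnergy W (fun k => x (g k))
      = ∑ k, ∑ l, if g k ≠ g l then W (x (g k)) (x (g l)) else 0 := by
        simp only [pairEnergy, hg.ne_iff]
    _ ≤ ∑ k, ∑ i', if g k ≠ i' then W (x (g k)) (x i') else 0 :=
        Finset.sum_le_sum fun k _ => sum_comp_le_sum_of_injective hg (hterm (g k))
    _ ≤ pairEnergy W x :=
        sum_comp_le_sum_of_injective hg fun i => Finset.sum_nonneg fun i' _ => hterm i i'

theorem measurable_pairEnergy [MeasurableSpace X] (hW : Measurable fun p : X × X => W p.1 p.2) :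
    Measurable fun x : ι → X => pairEnergy W x := by
  refine Finset.measurable_sum _ fun i _ => Finset.measurable_sum _ fun k _ => ?_
  have hpair : Measurable fun x : ι → X => (x i, x k) :=
    (measurable_pi_apply i).prodMk (measurable_pi_apply k)
  exact Measurable.ite (MeasurableSet.const _) (hW.comp hpair) measurable_const

theorem measurable_exp_pairEnergy [MeasurableSpace X]
    (hW : Measurable fun p : X × X => W p.1 p.2) (t : ℝ) :
    Measurable fun x : ι → X => ENNReal.ofReal (Real.exp (t * pairEnergy W x)) :=
  ((measurable_pairEnergy hW).const_mul t).exp.ennreal_ofReal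

end PairEnergy

section AppendConfig

variable {X : Type*} {j M N : ℕ}

/-- The configuration of `N` particles whose first `j` are at `y` and whose remaining ones are at
`z`. Unlike `Fin.append`, it allows any `M` with `N ≤ j + M`, in particular `M = N - j`. -/
def appendConfig (hN : N ≤ j + M) (y : Fin j → X) (z : Fin M → X) (i : Fin N) : X :=
  if h : (i : ℕ) < j then y ⟨i, h⟩ else z ⟨(i : ℕ) - j, by have := i.isLt; omega⟩

theorem appendConfig_comp_finSumFinEquiv (hN : j + M = N) (y : Fin j → X) (z : Fin M → X) :
    appendConfig hN.ge y z ∘ finSumFinEquiv.trans (finCongr hN) = Sum.elim y z := by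
  ext (i | k) <;> simp [appendConfig]

end AppendConfig

section Gibbs

variable {X : Type*} [MeasurableSpace X] (μ : Measure X) (W : X → X → ℝ)

/-- The partition function `∫ exp (t * pairEnergy W x)` of the particles labelled by `ι`. The rate
`t` is `-β / N` for the Hamiltonian `pairHam` of `N` particles at inverse temperature `β`; it is
kept separate from the number of particles, as a subsystem keeps the rate of the full one. -/
noncomputable def partitionFunction (ι : Type*) [Fintype ι] [DecidableEq ι] (t : ℝ) : ℝ≥0∞ :=
  ∫⁻ x : ι → X, ENNReal.ofReal (Real.exp (t * pairEnergy W x)) ∂Measure.pi (fun _ => μ)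

/-- The density at `y`, with respect to the product measure, of the `ι`-marginal of the Gibbs
measure at rate `t` of the particles labelled by `ι ⊕ κ`. -/
noncomputable def marginalDensity {ι : Type*} (κ : Type*) [Fintype ι] [DecidableEq ι] [Fintype κ]
    [DecidableEq κ] (t : ℝ) (y : ι → X) : ℝ≥0∞ :=
  (∫⁻ z : κ → X, ENNReal.ofReal (Real.exp (t * pairEnergy W (Sum.elim y z)))
    ∂Measure.pi (fun _ => μ)) / partitionFunction μ W (ι ⊕ κ) t

variable {ι κ : Type*} [Fintype ι] [Fintype κ] [DecidableEq κ] {W}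

theorem lintegral_exp_pairEnergy_sumElim [DecidableEq ι] (hWsym : ∀ a b, W a b = W b a) (t : ℝ)
    (y : ι → X) :
    ∫⁻ z : κ → X, ENNReal.ofReal (Real.exp (t * pairEnergy W (Sum.elim y z)))
        ∂Measure.pi (fun _ => μ)
      = ENNReal.ofReal (Real.exp (t * pairEnergy W y)) *
        ∫⁻ z : κ → X, ENNReal.ofReal (Real.exp (2 * t * crossEnergy W y z + t * pairEnergy W z))
          ∂Measure.pi (fun _ => μ) := by
  rw [← lintegral_const_mul' _ _ ENNReal.ofReal_ne_top]
  refine lintegral_congr fun z => ?_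
  rw [← ofReal_exp_add, pairEnergy_sumElim hWsym]
  ring_nf

variable [IsProbabilityMeasure μ]

theorem lintegral_exp_crossEnergy_add_pairEnergy_le
    (hWmeas : Measurable fun p : X × X => W p.1 p.2) (hW0 : ∀ a b, 0 ≤ W a b) {b : ℝ} {A : ℝ≥0∞}
    (hA : ∀ a, ∫⁻ a', ENNReal.ofReal (Real.exp (b * W a a')) ∂μ ≤ A) (y : ι → X)
    {p u v : ℝ} (hp : 0 ≤ p) (hu : 0 ≤ u) (hv : 0 ≤ v) (hpuv : Fintype.card ι * p + (u + v) = 1)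
    {r s t : ℝ} (hr : r ≤ u * s + v * t) :
    ∫⁻ z : κ → X, ENNReal.ofReal
        (Real.exp (p * (b * crossEnergy W y z) + r * pairEnergy W z)) ∂Measure.pi (fun _ => μ)
      ≤ ((A ^ Fintype.card κ) ^ p) ^ Fintype.card ι *
        (partitionFunction μ W κ s ^ u * partitionFunction μ W κ t ^ v) := by
  let f : ι ⊕ Bool → (κ → X) → ℝ := Sum.elim (fun i z => ∑ k, b * W (y i) (z k))
    fun c z => bif c then s * pairEnergy W z else t * pairEnergy W z
  let w : ι ⊕ Bool → ℝ := Sum.elim (fun _ => p) fun c => bif c then u else v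
  have hWy (i : ι) : Measurable fun a => b * W (y i) a :=
    (hWmeas.of_uncurry_left (f := W)).const_mul b
  have hf : ∀ c, Measurable (f c)
    | .inl i => Finset.measurable_sum _ fun k _ => (hWy i).comp (measurable_pi_apply k)
    | .inr true => (measurable_pairEnergy hWmeas).const_mul s
    | .inr false => (measurable_pairEnergy hWmeas).const_mul t
  have hw : ∀ c, 0 ≤ w c
    | .inl _ => hp
    | .inr true => hu
    | .inr false => hv
  have hw1 : ∑ c, w c = 1 := by simpa [w] using hpuv
  have hexp (z : κ → X) :
      p * (b * crossEnergy W y z) + r * pairEnergy W z ≤ ∑ c, w c * f c z := by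
    simp only [w, f, Fintype.sum_sum_type, Fintype.sum_bool, Sum.elim_inl, Sum.elim_inr, cond_true,
      cond_false, crossEnergy, Finset.mul_sum]
    linarith [mul_le_mul_of_nonneg_right hr (pairEnergy_nonneg hW0 z)]
  have hcross (i : ι) : ∫⁻ z, ENNReal.ofReal (Real.exp (f (.inl i) z)) ∂Measure.pi (fun _ => μ)
      ≤ A ^ Fintype.card κ :=
    (lintegral_pi_exp_sum μ (hWy i)).trans_le (pow_le_pow_left' (hA (y i)) _)
  calc _ ≤ ∫⁻ z, ENNReal.ofReal (Real.exp (∑ c, w c * f c z)) ∂Measure.pi (fun _ => μ) :=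
        lintegral_mono fun z => ofReal_exp_le_ofReal_exp (hexp z)
    _ ≤ ∏ c, (∫⁻ z, ENNReal.ofReal (Real.exp (f c z)) ∂Measure.pi (fun _ => μ)) ^ w c :=
        lintegral_exp_sum_mul_le (fun c => (hf c).aemeasurable) hw hw1
    _ ≤ _ := by
        rw [Fintype.prod_sum_type, Fintype.prod_bool]
        exact mul_le_mul_left
          (Finset.prod_le_pow_card _ _ _ fun i _ => ENNReal.rpow_le_rpow (hcross i) hp) _

variable [DecidableEq ι]

theorem one_le_partitionFunction (hW0 : ∀ a b, 0 ≤ W a b) {t : ℝ} (ht : 0 ≤ t) :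
    1 ≤ partitionFunction μ W ι t :=
  one_le_lintegral_exp <| ae_of_all _ fun x => mul_nonneg ht (pairEnergy_nonneg hW0 x)

theorem partitionFunction_congr (hWmeas : Measurable fun p : X × X => W p.1 p.2) (e : κ ≃ ι)
    (t : ℝ) : partitionFunction μ W κ t = partitionFunction μ W ι t := by
  rw [partitionFunction,
    ← (measurePreserving_pi_comp_injective (fun _ => μ) e.injective).lintegral_comp
      (measurable_exp_pairEnergy hWmeas t)]
  exact lintegral_congr fun x => by rw [← pairEnergy_comp_equiv W x e, Function.comp_def]

theorem partitionFunction_le_of_injective (hWmeas : Measurable fun p : X × X => W p.1 p.2)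
    (hW0 : ∀ a b, 0 ≤ W a b) {g : κ → ι} (hg : Function.Injective g) {t : ℝ} (ht : 0 ≤ t) :
    partitionFunction μ W κ t ≤ partitionFunction μ W ι t := by
  rw [partitionFunction,
    ← (measurePreserving_pi_comp_injective (fun _ => μ) hg).lintegral_comp
      (measurable_exp_pairEnergy hWmeas t)]
  exact lintegral_mono fun x => ofReal_exp_le_ofReal_exp <|
    mul_le_mul_of_nonneg_left (pairEnergy_comp_le hW0 x hg) ht

theorem marginalDensity_le_of_weights (hWmeas : Measurable fun p : X × X => W p.1 p.2)
    (hWsym : ∀ a b, W a b = W b a) (hW0 : ∀ a b, 0 ≤ W a b) {b : ℝ} {A : ℝ≥0∞}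
    (hA : ∀ a, ∫⁻ a', ENNReal.ofReal (Real.exp (b * W a a')) ∂μ ≤ A) {p u v : ℝ} (hp : 0 ≤ p)
    (hu : 0 ≤ u) (hv : 0 ≤ v) (hpuv : Fintype.card ι * p + (u + v) = 1) {t s : ℝ} (ht : 0 ≤ t)
    (hpb : p * b = 2 * t) (hts : t ≤ u * t + v * s) (y : ι → X) :
    marginalDensity μ W κ t y ≤ ENNReal.ofReal (Real.exp (t * pairEnergy W y)) *
      (((A ^ Fintype.card κ) ^ p) ^ Fintype.card ι * partitionFunction μ W κ s ^ v) := by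
  have hu1 : u ≤ 1 := by
    have : 0 ≤ Fintype.card ι * p := by positivity
    linarith
  have hrest : partitionFunction μ W κ t ^ u ≤ partitionFunction μ W (ι ⊕ κ) t :=
    calc _ ≤ partitionFunction μ W κ t ^ (1 : ℝ) :=
          ENNReal.rpow_le_rpow_of_exponent_le (one_le_partitionFunction μ hW0 ht) hu1
      _ = partitionFunction μ W κ t := ENNReal.rpow_one _
      _ ≤ _ := partitionFunction_le_of_injective μ hWmeas hW0 Sum.inr_injective ht
  refine ENNReal.div_le_of_le_mul ?_
  rw [lintegral_exp_pairEnergy_sumElim μ hWsym, ← hpb, mul_assoc]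
  simp only [mul_assoc p b]
  gcongr
  calc _ ≤ ((A ^ Fintype.card κ) ^ p) ^ Fintype.card ι *
        (partitionFunction μ W κ t ^ u * partitionFunction μ W κ s ^ v) :=
        lintegral_exp_crossEnergy_add_pairEnergy_le μ hWmeas hW0 hA y hp hu hv hpuv hts
    _ ≤ ((A ^ Fintype.card κ) ^ p) ^ Fintype.card ι *
        (partitionFunction μ W (ι ⊕ κ) t * partitionFunction μ W κ s ^ v) := by gcongr
    _ = _ := by ring

theorem marginalDensity_le [Nonempty κ] (hWmeas : Measurable fun p : X × X => W p.1 p.2)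
    (hWsym : ∀ a b, W a b = W b a) (hW0 : ∀ a b, 0 ≤ W a b) {b b₀ : ℝ} (hb : 0 ≤ b)
    (hb₀ : b < b₀) {A : ℝ≥0∞} (hA : ∀ a, ∫⁻ a', ENNReal.ofReal (Real.exp (b * W a a')) ∂μ ≤ A)
    {K N : ℝ} (hK : K = 2 * Fintype.card ι * b / (b₀ - b))
    (hN : N = Fintype.card ι + Fintype.card κ) (hKN : 2 * Fintype.card ι + K ≤ N) (y : ι → X) :
    marginalDensity μ W κ (b / N) y ≤ ENNReal.ofReal (Real.exp (b / N * pairEnergy W y)) *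
      (A ^ (2 * Fintype.card ι) * partitionFunction μ W κ (b₀ / Fintype.card κ) ^ (K / N)) := by
  have hκ : (0 : ℝ) < Fintype.card κ := Nat.cast_pos.2 Fintype.card_pos
  have hκN : Fintype.card κ ≤ N := by rw [hN]; exact le_add_of_nonneg_left (Nat.cast_nonneg _)
  have hNpos : 0 < N := hκ.trans_le hκN
  have hgap : 0 < b₀ - b := sub_pos.2 hb₀
  have hK0 : 0 ≤ K := by rw [hK]; positivity
  have hA1 : 1 ≤ A := by
    obtain ⟨a⟩ := μ.nonempty_of_neZero
    exact (one_le_lintegral_exp (ae_of_all μ fun a' => mul_nonneg hb (hW0 a a'))).trans (hA a)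
  set u := 1 - (2 * Fintype.card ι + K) / N with hu
  have hu0 : 0 ≤ u := sub_nonneg.2 ((div_le_one hNpos).2 hKN)
  have hsum : Fintype.card ι * (2 / N) + (u + K / N) = 1 := by rw [hu]; ring
  have hrate : b / N ≤ u * (b / N) + K / N * (b₀ / Fintype.card κ) :=
    calc b / N = u * (b / N) + K / N * (b₀ / N) := by rw [hu, hK]; field_simp; ring
      _ ≤ _ := by have := hb.trans hb₀.le; gcongr
  calc _ ≤ ENNReal.ofReal (Real.exp (b / N * pairEnergy W y)) *
        (((A ^ Fintype.card κ) ^ (2 / N)) ^ Fintype.card ι *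
          partitionFunction μ W κ (b₀ / Fintype.card κ) ^ (K / N)) :=
        marginalDensity_le_of_weights μ hWmeas hWsym hW0 hA (by positivity) hu0 (by positivity)
          hsum (by positivity) (by ring) hrate y
    _ ≤ _ := by
        rw [pow_mul]
        gcongr
        exact pow_rpow_two_div_le hA1 hNpos hκN

theorem marginal_pairHam_eq_marginalDensity (hWmeas : Measurable fun p : X × X => W p.1 p.2)
    (β : ℝ) {j M N : ℕ} (hN : j + M = N) (y : Fin j → X) :
    (∫⁻ z : Fin M → X, ENNReal.ofReal (Real.exp (-β * pairHam W N (appendConfig hN.ge y z)))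
        ∂Measure.pi (fun _ => μ))
      / (∫⁻ x : Fin N → X, ENNReal.ofReal (Real.exp (-β * pairHam W N x))
        ∂Measure.pi (fun _ => μ))
      = marginalDensity μ W (Fin M) (-β / N) y := by
  rw [marginalDensity, partitionFunction_congr μ hWmeas (finSumFinEquiv.trans (finCongr hN)),
    partitionFunction]
  simp only [mul_pairHam, ← appendConfig_comp_finSumFinEquiv hN, pairEnergy_comp_equiv]

end Gibbs

theorem stmt17_general {X : Type*} [MeasurableSpace X]
    (μ₀ : Measure X) [IsProbabilityMeasure μ₀]
    (W : X → X → ℝ) (hWmeas : Measurable (fun p : X × X => W p.1 p.2))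
    (hWsym : ∀ x y, W x y = W y x) (hW0 : ∀ x y, 0 ≤ W x y)
    (β₀ β : ℝ) (hβ₀ : β₀ < β) (hβ : β < 0)
    (A : ℝ≥0∞) (hA : A ≠ ⊤)
    (hint : ∀ x : X, ∫⁻ y, ENNReal.ofReal (Real.exp (-β * W x y)) ∂μ₀ ≤ A)
    (C : ℝ)
    (hZ : ∀ N : ℕ, 1 ≤ N →
      ∫⁻ x : Fin N → X, ENNReal.ofReal (Real.exp (-β₀ * pairHam W N x))
          ∂(Measure.pi (fun _ : Fin N => μ₀))
        ≤ ENNReal.ofReal (Real.exp (C * N)))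
    (j : ℕ) :
    ∃ (Cj : ℝ) (N₀ : ℕ), ∀ N : ℕ, N₀ ≤ N → j < N → ∀ y : Fin j → X,
      ((∫⁻ z : Fin (N - j) → X,
          ENNReal.ofReal (Real.exp (-β * pairHam W N (appendConfig le_add_tsub y z)))
          ∂(Measure.pi (fun _ : Fin (N - j) => μ₀)))
        / (∫⁻ x : Fin N → X, ENNReal.ofReal (Real.exp (-β * pairHam W N x))
            ∂(Measure.pi (fun _ : Fin N => μ₀))))
      ≤ ENNReal.ofReal (Cj * Real.exp (-(β / N) * pairEnergy W y)) := by
  have hb : 0 < -β := neg_pos.2 hβ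
  have hb₀ : -β < -β₀ := neg_lt_neg hβ₀
  set K : ℝ := 2 * j * -β / (-β₀ - -β)
  have hK0 : 0 ≤ K := div_nonneg (by positivity) (sub_pos.2 hb₀).le
  refine ⟨(A ^ (2 * j)).toReal * Real.exp (|C| * K), ⌈2 * j + K⌉₊, fun N hN hjN y => ?_⟩
  have : NeZero (N - j) := ⟨Nat.sub_ne_zero_of_lt hjN⟩
  have hM : (0 : ℝ) < (N - j : ℕ) := Nat.cast_pos.2 (Nat.sub_pos_of_lt hjN)
  have hcard : (N : ℝ) = j + (N - j : ℕ) := by rw [← Nat.cast_add, Nat.add_sub_of_le hjN.le]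
  have hdensity := marginalDensity_le μ₀ (κ := Fin (N - j)) (K := K) (N := N) hWmeas hWsym hW0
    hb.le hb₀ hint (by rw [Fintype.card_fin]) (by simpa only [Fintype.card_fin] using hcard)
    (by simpa only [Fintype.card_fin] using Nat.ceil_le.1 hN) y
  have hlarge : partitionFunction μ₀ W (Fin (N - j)) (-β₀ / (N - j : ℕ)) ^ (K / N)
      ≤ ENNReal.ofReal (Real.exp (|C| * K)) := by
    refine rpow_div_le_of_le_exp_mul ?_ hM (Nat.cast_le.2 (Nat.sub_le N j)) hK0
    simpa only [mul_pairHam, partitionFunction] using hZ (N - j) (Nat.sub_pos_of_lt hjN)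
  rw [marginal_pairHam_eq_marginalDensity μ₀ hWmeas β (Nat.add_sub_of_le hjN.le),
    ← neg_div, ENNReal.ofReal_mul (by positivity), ENNReal.ofReal_mul ENNReal.toReal_nonneg,
    ENNReal.ofReal_toReal (ENNReal.pow_ne_top hA), mul_comm]
  simp only [Fintype.card_fin] at hdensity
  exact hdensity.trans (by gcongr)

/-- Iterated Hölder estimate for marginal densities of Gibbs measures at negative
temperature: under a uniform-in-`x` integrability bound for `e^{-βW(x,·)}` and an
exponential bound on the partition functions for all `β' ∈ [β₀,β]`, the density of the
`j`-th marginal of the Gibbs measure satisfies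
`ρ_j^{(N)}(y) ≤ C_j e^{-(β/N) Σ_{k≠l≤j} W(y_k,y_l)}` for all `N` sufficiently large,
with `C_j` independent of `N`. -/
theorem stmt17 {X : Type*} [MetricSpace X] [CompactSpace X] [MeasurableSpace X] [BorelSpace X]
    (μ₀ : Measure X) [IsProbabilityMeasure μ₀]
    (W : X → X → ℝ) (hWmeas : Measurable (fun p : X × X => W p.1 p.2))
    (hWsym : ∀ x y, W x y = W y x) (hW0 : ∀ x y, 0 ≤ W x y)
    (β₀ β : ℝ) (hβ₀ : β₀ < β) (hβ : β < 0)
    (A : ℝ≥0∞) (hA : A ≠ ⊤)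
    (hint : ∀ x : X, ∫⁻ y, ENNReal.ofReal (Real.exp (-β * W x y)) ∂μ₀ ≤ A)
    (C : ℝ)
    (hZ : ∀ β' ∈ Set.Icc β₀ β, ∀ N : ℕ, 1 ≤ N →
      ∫⁻ x : Fin N → X, ENNReal.ofReal (Real.exp (-β' * pairHam W N x))
          ∂(Measure.pi (fun _ : Fin N => μ₀))
        ≤ ENNReal.ofReal (Real.exp (C * N)))
    (j : ℕ) (hj : 1 ≤ j) :
    ∃ (Cj : ℝ) (N₀ : ℕ), ∀ N : ℕ, N₀ ≤ N → j < N → ∀ y : Fin j → X,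
      ((∫⁻ z : Fin (N - j) → X,
          ENNReal.ofReal (Real.exp (-β * pairHam W N (fun i : Fin N =>
            if h : (i : ℕ) < j then y ⟨i, h⟩
            else z ⟨(i : ℕ) - j, by have := i.isLt; omega⟩)))
          ∂(Measure.pi (fun _ : Fin (N - j) => μ₀)))
        / (∫⁻ x : Fin N → X, ENNReal.ofReal (Real.exp (-β * pairHam W N x))
            ∂(Measure.pi (fun _ : Fin N => μ₀))))
      ≤ ENNReal.ofReal (Cj * Real.exp (-(β / N) *
          ∑ k : Fin j, ∑ l : Fin j, if k ≠ l then W (y k) (y l) else 0)) :=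
  stmt17_general μ₀ W hWmeas hWsym hW0 β₀ β hβ₀ hβ A hA hint C
    (hZ β₀ (Set.left_mem_Icc.2 hβ₀.le)) j
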